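/- Let d ≥ 1, D ≥ 1, and let (A_n)_{n≥1} be rotor-router aggregation in ℤ^d built from any configuration of rotor stacks with discrepancy at most D, with T_n the total number of steps taken by the first n particles. Then there is a constant C = C(d), independent of n, D, and the rotor configuration, such that for all n ≥ 1, |T_n − (n · e_o(A_n) − ∑_{x ∈ A_n} e_x(A_n))| ≤ C D n^{1 + 1/d}. -/

import Mathlib

open scoped BigOperators Pointwise symmDiff
open MeasureTheory Filter

noncomputable section
open scoped Classical
namespace RotorRouterPaper

/-- Sites of the lattice `ℤ^d`. -/
abbrev Site (d : ℕ) := Fin d → ℤ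

/-- The `i`-th standard basis vector of `ℤ^d`. -/
def unitVec (d : ℕ) (i : Fin d) : Site d := fun j => if j = i then 1 else 0

/-- Squared Euclidean norm of a lattice point. -/
def nsq {d : ℕ} (x : Site d) : ℝ := ∑ i, ((x i : ℝ)) ^ 2

/-- Euclidean norm of a lattice point. -/
def enorm {d : ℕ} (x : Site d) : ℝ := Real.sqrt (nsq x)

/-- Adjacency `x ∼ y`: Euclidean distance one. -/
def Adj {d : ℕ} (x y : Site d) : Prop := nsq (x - y) = 1

/-- `ω_d`, the Lebesgue volume of the unit ball in `ℝ^d`. -/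
def ballVol (d : ℕ) : ℝ := (volume (Metric.ball (0 : EuclideanSpace ℝ (Fin d)) 1)).toReal

/-- The lattice ball `B_n = {y ∈ ℤ^d : ω_d ‖y‖^d < n}`. -/
def lball (d n : ℕ) : Set (Site d) := {y | ballVol d * enorm y ^ d < (n : ℝ)}

/-- Characterization of the expected exit time function of a (finite) region `A ⊆ ℤ^d`:
it vanishes off `A` and its discrete Laplacian is `-1` on `A`. -/
def IsExitFun (d : ℕ) (A : Set (Site d)) (e : Site d → ℝ) : Prop :=
  (∀ x, x ∉ A → e x = 0) ∧
  ∀ x ∈ A, (1 / (2 * (d : ℝ))) * (∑ i, (e (x + unitVec d i) + e (x - unitVec d i))) - e x = -1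

/-- The expected exit time function `x ↦ e_x(A)` (the unique function satisfying
`IsExitFun` when `A` is finite). -/
def exitFun (d : ℕ) (A : Set (Site d)) : Site d → ℝ :=
  if h : ∃ e, IsExitFun d A e then h.choose else 0

/-- `ē(A) = sup_x e_x(A)`. -/
def ebar (d : ℕ) (A : Set (Site d)) : ℝ := sSup (Set.range (exitFun d A))

/-- `φ(n) = sup {ē(A) - e_o(B_n) : A ⊆ ℤ^d, |A| = n}`. -/
def phi (d n : ℕ) : ℝ :=
  sSup {t | ∃ A : Set (Site d), A.Finite ∧ A.ncard = n ∧ t = ebar d A - exitFun d (lball d n) 0}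

/-- `Φ(n) = ∑_{j=1}^n φ(j)`. -/
def PhiSum (d n : ℕ) : ℝ := ∑ j ∈ Finset.Icc 1 n, phi d j

/-- `ψ(A) = ∑_{x ∈ A} ‖x‖²`. -/
def psi {d : ℕ} (A : Set (Site d)) : ℝ := ∑ᶠ x ∈ A, nsq x

/-- A cardinal direction in `ℤ^d`: one of `±e_1, …, ±e_d`. -/
abbrev Dir (d : ℕ) := Fin d × Bool

/-- The lattice step vector of a cardinal direction. -/
def dirVec (d : ℕ) (ε : Dir d) : Site d := if ε.2 then unitVec d ε.1 else -unitVec d ε.1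

/-- A configuration of rotor stacks `r` (with `r x i` the direction used for the
`(i+1)`-st visit to `x`) has discrepancy at most `D` if for every site, direction and `m ≥ 1`,
among the first `m` rotors of the stack each direction occurs `m/(2d)` times up to error `D`. -/
def HasDiscrepancy (d : ℕ) (D : ℝ) (r : Site d → ℕ → Dir d) : Prop :=
  ∀ (x : Site d) (ε : Dir d) (m : ℕ), 1 ≤ m →
    |(({i | i < m ∧ r x i = ε} : Set ℕ).ncard : ℝ) - (m : ℝ) / (2 * (d : ℝ))| ≤ D

/-- One step of rotor-router walk on a state (current position, visit counts so far):
the particle at `p` being visited for the `(c p + 1)`-st time moves in direction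
`r p (c p)` and the visit count at `p` increases by one. -/
def rstep {d : ℕ} (r : Site d → ℕ → Dir d) (s : Site d × (Site d → ℕ)) :
    Site d × (Site d → ℕ) :=
  (s.1 + dirVec d (r s.1 (s.2 s.1)), Function.update s.2 s.1 (s.2 s.1 + 1))

/-- The state after `t` steps of rotor-router walk started at the origin with visit counts `c`. -/
def walkState {d : ℕ} (r : Site d → ℕ → Dir d) (c : Site d → ℕ) (t : ℕ) :
    Site d × (Site d → ℕ) :=
  (rstep r)^[t] (0, c)

/-- The number of steps until the rotor-router walk started at the origin
(with carried-over visit counts `c`) first leaves the region `A`. -/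
def exitSteps {d : ℕ} (r : Site d → ℕ → Dir d) (A : Set (Site d)) (c : Site d → ℕ) : ℕ :=
  sInf {t | (walkState r c t).1 ∉ A}

/-- The state of rotor-router aggregation after `n` particles have walked and settled:
`(aggState r n).1` is the occupied region `A_{n+1}`, `(aggState r n).2.1` the accumulated
visit counts, and `(aggState r n).2.2` the total number `T_n` of steps taken so far. -/
def aggState {d : ℕ} (r : Site d → ℕ → Dir d) : ℕ → Set (Site d) × (Site d → ℕ) × ℕ
  | 0 => ({0}, fun _ => 0, 0)
  | n + 1 =>
      let s := aggState r n
      let τ := exitSteps r s.1 s.2.1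
      (insert (walkState r s.2.1 τ).1 s.1, (walkState r s.2.1 τ).2, s.2.2 + τ)

/-- The region `A_n` of rotor-router aggregation (for `n ≥ 1`). -/
def aggRegion {d : ℕ} (r : Site d → ℕ → Dir d) (n : ℕ) : Set (Site d) :=
  (aggState r (n - 1)).1

/-- `T_n`, the total number of steps taken by the first `n` particles. -/
def totalSteps {d : ℕ} (r : Site d → ℕ → Dir d) (n : ℕ) : ℕ := (aggState r n).2.2

/-- `A^□ = A + [-1/2,1/2]^d ⊆ ℝ^d`. -/
def box (d : ℕ) (A : Set (Site d)) : Set (EuclideanSpace ℝ (Fin d)) :=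
  {z | ∃ x ∈ A, ∀ i, |z i - (x i : ℝ)| ≤ 1 / 2}

/-- The closed Euclidean ball of unit volume centered at the origin of `ℝ^d`. -/
def unitVolBall (d : ℕ) : Set (EuclideanSpace ℝ (Fin d)) :=
  Metric.closedBall 0 (ballVol d ^ (-(1 : ℝ) / (d : ℝ)))

/-- `A ⊆ ℤ^d` is orthoconvex if every line parallel to a coordinate axis meets `A`
in an interval. -/
def Orthoconvex (d : ℕ) (A : Set (Site d)) : Prop :=
  ∀ x ∈ A, ∀ i : Fin d, ∀ k : ℤ, 0 < k → x + k • unitVec d i ∈ A →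
    ∀ j : ℤ, 0 < j → j < k → x + j • unitVec d i ∈ A

/-- The nonnegative orthant `Q ⊆ ℤ^d`. -/
def orthant (d : ℕ) : Set (Site d) := {x | ∀ i, 0 ≤ x i}

/-- The cube `C(o,r) = {x : ‖x‖_∞ ≤ r}`. -/
def cubeSet (d : ℕ) (r : ℕ) : Set (Site d) := {x | ∀ i, |x i| ≤ (r : ℤ)}

/-- The boundary `∂C(o,r) = {x : ‖x‖_∞ = r + 1 and x ∼ y for some y ∈ C(o,r)}`. -/
def cubeBdry (d : ℕ) (r : ℕ) : Set (Site d) :=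
  {x | (∀ i, |x i| ≤ (r : ℤ) + 1) ∧ (∃ i, |x i| = (r : ℤ) + 1) ∧ ∃ y ∈ cubeSet d r, Adj x y}

/-- Characterization of `h_r(x) = P_x(T_Q > T_{∂C(o,r)})`: it vanishes on
`Q ∩ (C(o,r) ∪ ∂C(o,r))`, equals `1` on `∂C(o,r) ∖ Q`, is discrete harmonic on
`C(o,r) ∖ Q`, and (as a normalization) vanishes off `C(o,r) ∪ ∂C(o,r)`. -/
def IsOrthHarm (d : ℕ) (r : ℕ) (h : Site d → ℝ) : Prop :=
  (∀ x, x ∉ cubeSet d r ∪ cubeBdry d r → h x = 0) ∧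
  (∀ x ∈ orthant d ∩ (cubeSet d r ∪ cubeBdry d r), h x = 0) ∧
  (∀ x ∈ cubeBdry d r \ orthant d, h x = 1) ∧
  (∀ x ∈ cubeSet d r \ orthant d,
    h x = (1 / (2 * (d : ℝ))) * ∑ i, (h (x + unitVec d i) + h (x - unitVec d i)))

/-- The function `h_r` of the previous characterization. -/
def orthHarm (d : ℕ) (r : ℕ) : Site d → ℝ :=
  if h : ∃ f, IsOrthHarm d r f then h.choose else 0

/-- `p(k,r) = sup {h_r(x) : ‖x‖_∞ ≤ k}`. -/
def pkr (d k r : ℕ) : ℝ :=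
  sSup {t | ∃ x : Site d, (∀ i, |x i| ≤ (k : ℤ)) ∧ t = orthHarm d r x}

/-- The exponent `γ_d` of Theorem 3.1. -/
def gam (d : ℕ) : ℝ :=
  if d = 1 then 1 else if d = 2 then 1 / 3
  else (2 : ℝ) ^ (-(d : ℝ)) / (2 * (d : ℝ) ^ 2 * Real.log 3)

/-- `f` vanishes off the finite set `A`. -/
def Supp {d : ℕ} (A : Finset (Site d)) (f : Site d → ℝ) : Prop := ∀ x, x ∉ A → f x = 0

/-- The `ℓ¹` norm of the increment of `f` in direction `u`. -/
def Nv {d : ℕ} (f : Site d → ℝ) (u : Site d) : ℝ := ∑' x, |f (x + u) - f x|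

/-- The `ℓ¹` norm of the gradient of `f`. -/
def Gv {d : ℕ} (f : Site d → ℝ) : ℝ := ∑ i, Nv f (unitVec d i)

lemma summ_two {d : ℕ} {A : Finset (Site d)} (u : Site d) (g : Site d → ℝ)
    (hg : ∀ x, x ∉ A → x + u ∉ A → g x = 0) : Summable g := by
  apply summable_of_ne_finset_zero (s := A ∪ A.image (fun x => x - u))
  intro x hx
  simp only [Finset.mem_union, Finset.mem_image, not_or, not_exists, not_and] at hx
  refine hg x hx.1 fun h => hx.2 _ h (by simp)

lemma summ_N {d : ℕ} {A : Finset (Site d)} {f : Site d → ℝ} (hf : Supp A f) (u : Site d) :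
    Summable (fun x => |f (x + u) - f x|) :=
  summ_two (A := A) u _ fun x h1 h2 => by simp [hf _ h1, hf _ h2]

lemma N_nonneg {d : ℕ} (f : Site d → ℝ) (u : Site d) : 0 ≤ Nv f u :=
  tsum_nonneg fun _ => abs_nonneg _

lemma G_nonneg {d : ℕ} (f : Site d → ℝ) : 0 ≤ Gv f :=
  Finset.sum_nonneg fun _ _ => N_nonneg _ _

lemma N_zero {d : ℕ} (f : Site d → ℝ) : Nv f 0 = 0 := by simp [Nv]

lemma N_neg {d : ℕ} (f : Site d → ℝ) (u : Site d) : Nv f (-u) = Nv f u := by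
  unfold Nv
  rw [← (Equiv.addRight u).tsum_eq]
  refine tsum_congr fun x => ?_
  simp [abs_sub_comm]

lemma N_add {d : ℕ} {A : Finset (Site d)} {f : Site d → ℝ} (hf : Supp A f) (u v : Site d) :
    Nv f (u + v) ≤ Nv f u + Nv f v := by
  have h1 : Nv f v = ∑' x, |f (x + u + v) - f (x + u)| := by
    unfold Nv
    rw [← (Equiv.addRight u).tsum_eq]
    simp
  have hs : Summable (fun x => |f (x + u + v) - f (x + u)|) :=
    (Equiv.addRight u).summable_iff.mpr (summ_N hf v)
  rw [h1]
  unfold Nv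
  rw [← (summ_N hf u).tsum_add hs]
  refine (summ_N hf _).tsum_le_tsum (fun x => ?_) ((summ_N hf u).add hs)
  rw [← add_assoc]
  have := abs_add_le (f (x + u) - f x) (f (x + u + v) - f (x + u))
  rwa [sub_add_sub_cancel'] at this

lemma N_nsmul {d : ℕ} {A : Finset (Site d)} {f : Site d → ℝ} (hf : Supp A f) (u : Site d)
    (k : ℕ) : Nv f (k • u) ≤ k * Nv f u := by
  induction k with
  | zero => simp [N_zero]
  | succ k ih =>
    rw [succ_nsmul]
    refine (N_add hf _ _).trans ?_
    push_cast
    linarith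

lemma N_sum {d : ℕ} {A : Finset (Site d)} {f : Site d → ℝ} (hf : Supp A f)
    {ι : Type*} (s : Finset ι) (w : ι → Site d) : Nv f (∑ i ∈ s, w i) ≤ ∑ i ∈ s, Nv f (w i) := by
  classical
  induction s using Finset.induction_on with
  | empty => simp [N_zero]
  | insert a s ha ih =>
    rw [Finset.sum_insert ha, Finset.sum_insert ha]
    exact (N_add hf _ _).trans (by linarith)

/-- Lattice point with natural coordinates. -/
def bpt {d m : ℕ} (k : Fin d → Fin m) : Site d := fun i => ((k i : ℕ) : ℤ)

lemma bpt_eq {d m : ℕ} (k : Fin d → Fin m) :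
    bpt k = ∑ i, (k i : ℕ) • unitVec d i := by
  funext j
  simp [bpt, unitVec, Finset.sum_apply]

lemma bpt_inj {d m : ℕ} : Function.Injective (bpt (d := d) (m := m)) := by
  intro k l h
  funext i
  have := congrFun h i
  simp only [bpt] at this
  exact Fin.ext (by exact_mod_cast this)

lemma N_bpt {d m : ℕ} {A : Finset (Site d)} {f : Site d → ℝ} (hf : Supp A f)
    (k : Fin d → Fin m) : Nv f (bpt k) ≤ m * Gv f := by
  rw [bpt_eq]
  refine (N_sum hf _ _).trans ?_
  unfold Gv
  rw [Finset.mul_sum]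
  refine Finset.sum_le_sum fun i _ => (N_nsmul hf _ _).trans ?_
  exact mul_le_mul_of_nonneg_right (by exact_mod_cast (k i).2.le) (N_nonneg _ _)

lemma L1_bound {d m : ℕ} {A : Finset (Site d)} {f : Site d → ℝ} (hf : Supp A f)
    (hm : 0 < m) (hmA : 2 * A.card ≤ m ^ d) :
    ∑ x ∈ A, |f x| ≤ 2 * m * Gv f := by
  have h1 : ∑ k : Fin d → Fin m, ∑ x ∈ A, |f (x + bpt k) - f x| ≤ (m : ℝ) ^ d * (m * Gv f) := by
    calc _ ≤ ∑ k : Fin d → Fin m, (m * Gv f) := by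
          refine Finset.sum_le_sum fun k _ => le_trans ?_ (N_bpt hf k)
          exact (summ_N hf _).sum_le_tsum _ fun _ _ => abs_nonneg _
      _ = _ := by simp
  rw [Finset.sum_comm] at h1
  have h2 : ∀ x ∈ A, (m : ℝ) ^ d / 2 * |f x| ≤ ∑ k : Fin d → Fin m, |f (x + bpt k) - f x| := by
    intro x _
    set B := (Finset.univ : Finset (Fin d → Fin m)).filter (fun k => x + bpt k ∈ A) with hB
    have hBc : B.card ≤ A.card := by
      apply Finset.card_le_card_of_injOn (fun k => x + bpt k)
      · intro k hk
        simpa [hB] using hk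
      · intro k _ l _ h
        exact bpt_inj (add_left_cancel h)
    have h3 : (m : ℝ) ^ d / 2 ≤ (Bᶜ.card : ℝ) := by
      have : Bᶜ.card + B.card = m ^ d := by
        rw [Finset.card_compl_add_card]; simp
      have h4 : (Bᶜ.card : ℝ) + B.card = (m : ℝ) ^ d := by exact_mod_cast this
      have h5 : 2 * (A.card : ℝ) ≤ (m : ℝ) ^ d := by exact_mod_cast hmA
      have h6 : (B.card : ℝ) ≤ A.card := by exact_mod_cast hBc
      linarith
    calc _ ≤ (Bᶜ.card : ℝ) * |f x| := mul_le_mul_of_nonneg_right h3 (abs_nonneg _)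
      _ = ∑ k ∈ Bᶜ, |f (x + bpt k) - f x| := by
          rw [← nsmul_eq_mul, ← Finset.sum_const]
          refine Finset.sum_congr rfl fun k hk => ?_
          have : x + bpt k ∉ A := by simpa [hB] using hk
          simp [hf _ this]
      _ ≤ _ := Finset.sum_le_sum_of_subset_of_nonneg (Finset.subset_univ _)
          fun _ _ _ => abs_nonneg _
  have h3 := (Finset.sum_le_sum h2).trans h1
  rw [← Finset.mul_sum] at h3
  have hp : (0 : ℝ) < (m : ℝ) ^ d := by positivity
  have h4 : (m : ℝ) ^ d * (∑ x ∈ A, |f x|) ≤ (m : ℝ) ^ d * (2 * m * Gv f) := by linarith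
  exact le_of_mul_le_mul_left h4 hp

/-- Discrete Laplacian. -/
def lap {d : ℕ} (f : Site d → ℝ) (x : Site d) : ℝ :=
  (1 / (2 * (d : ℝ))) * (∑ i, (f (x + unitVec d i) + f (x - unitVec d i))) - f x

/-- Directional energy. -/
def Ev {d : ℕ} (f : Site d → ℝ) (u : Site d) : ℝ := ∑' x, (f (x + u) - f x) ^ 2

lemma summ_E {d : ℕ} {A : Finset (Site d)} {f : Site d → ℝ} (hf : Supp A f) (u : Site d) :
    Summable (fun x => (f (x + u) - f x) ^ 2) :=
  summ_two (A := A) u _ fun x h1 h2 => by simp [hf _ h1, hf _ h2]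

lemma E_eq {d : ℕ} {A : Finset (Site d)} {f : Site d → ℝ} (hf : Supp A f) (u : Site d) :
    Ev f u = ∑ x ∈ A, f x * (2 * f x - f (x + u) - f (x - u)) := by
  have s1 : Summable (fun x => f x ^ 2) :=
    summ_two (A := A) 0 _ fun x h1 h2 => by simp [hf _ h1]
  have s2 : Summable (fun x => f x * f (x + u)) :=
    summ_two (A := A) 0 _ fun x h1 h2 => by simp [hf _ h1]
  have s3 : Summable (fun x => f x * f (x - u)) :=
    summ_two (A := A) 0 _ fun x h1 h2 => by simp [hf _ h1]
  have s4 : Summable (fun x => f (x + u) ^ 2) :=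
    summ_two (A := A) u _ fun x h1 h2 => by simp [hf _ h2]
  have e1 : ∑' x, f (x + u) ^ 2 = ∑' x, f x ^ 2 :=
    (Equiv.addRight u).tsum_eq (fun x => f x ^ 2)
  have e2 : ∑' x, f x * f (x - u) = ∑' x, f x * f (x + u) := by
    rw [← (Equiv.addRight u).tsum_eq (fun x => f x * f (x - u))]
    refine tsum_congr fun x => ?_
    simp [mul_comm]
  have r : ∑ x ∈ A, f x * (2 * f x - f (x + u) - f (x - u))
      = ∑' x, (2 * f x ^ 2 - f x * f (x + u) - f x * f (x - u)) := by
    rw [tsum_eq_sum (s := A)]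
    · exact Finset.sum_congr rfl fun x _ => by ring
    · intro x hx
      simp [hf x hx]
  have l : Ev f u = ∑' x, (f (x + u) ^ 2 + f x ^ 2 - 2 * (f x * f (x + u))) :=
    tsum_congr fun x => by ring
  have l2 := (s4.add s1).tsum_sub (s2.mul_left 2)
  have l3 := s4.tsum_add s1
  have r2 := ((s1.mul_left 2).sub s2).tsum_sub s3
  have r3 := (s1.mul_left 2).tsum_sub s2
  have m1 : ∑' x, 2 * f x ^ 2 = 2 * ∑' x, f x ^ 2 := tsum_mul_left
  have m2 : ∑' x, 2 * (f x * f (x + u)) = 2 * ∑' x, f x * f (x + u) := tsum_mul_left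
  rw [r, l, l2, l3, r2, r3, m1, m2, e1, e2]
  ring

lemma E_sum {d : ℕ} (hd : 1 ≤ d) {A : Finset (Site d)} {f : Site d → ℝ} (hf : Supp A f) :
    ∑ i, Ev f (unitVec d i) = 2 * d * ∑ x ∈ A, f x * (- lap f x) := by
  have hd' : (d : ℝ) ≠ 0 := by positivity
  simp_rw [E_eq hf]
  rw [Finset.sum_comm, Finset.mul_sum]
  refine Finset.sum_congr rfl fun x _ => ?_
  rw [← Finset.mul_sum]
  have : ∑ i, (2 * f x - f (x + unitVec d i) - f (x - unitVec d i))
      = 2 * d * f x - ∑ i, (f (x + unitVec d i) + f (x - unitVec d i)) := by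
    simp_rw [sub_sub]
    rw [Finset.sum_sub_distrib]
    simp
    ring
  rw [this]
  unfold lap
  field_simp
  ring

lemma N_sq {d : ℕ} {A : Finset (Site d)} {f : Site d → ℝ} (hf : Supp A f) (u : Site d) :
    Nv f u ^ 2 ≤ 2 * A.card * Ev f u := by
  set B := A ∪ A.image (fun x => x - u) with hB
  have hx : ∀ x, x ∉ B → f (x + u) - f x = 0 := by
    intro x hx
    simp only [hB, Finset.mem_union, Finset.mem_image, not_or, not_exists, not_and] at hx
    rw [hf x hx.1, hf (x + u) (fun h => hx.2 _ h (by simp)), sub_zero]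
  have h1 : Nv f u = ∑ x ∈ B, |f (x + u) - f x| :=
    tsum_eq_sum fun x h => by simp [hx x h]
  have h2 : Ev f u = ∑ x ∈ B, (f (x + u) - f x) ^ 2 :=
    tsum_eq_sum fun x h => by simp [hx x h]
  have hBc : (B.card : ℝ) ≤ 2 * A.card := by
    have h : B.card ≤ _ := Finset.card_union_le A (A.image (fun x => x - u))
    have h' := Finset.card_image_le (s := A) (f := fun x => x - u)
    have : B.card ≤ 2 * A.card := by omega
    exact_mod_cast this
  rw [h1, h2]
  refine (sq_sum_le_card_mul_sum_sq).trans ?_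
  simp_rw [sq_abs]
  exact mul_le_mul_of_nonneg_right hBc (Finset.sum_nonneg fun _ _ => sq_nonneg _)

lemma G_sq {d : ℕ} (hd : 1 ≤ d) {A : Finset (Site d)} {f : Site d → ℝ} (hf : Supp A f) :
    Gv f ^ 2 ≤ 4 * d ^ 2 * A.card * ∑ x ∈ A, f x * (- lap f x) := by
  have h1 : Gv f ^ 2 ≤ d * ∑ i, Nv f (unitVec d i) ^ 2 := by
    have := sq_sum_le_card_mul_sum_sq (s := (Finset.univ : Finset (Fin d)))
      (f := fun i => Nv f (unitVec d i))
    simpa [Gv] using this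
  have h2 : ∑ i, Nv f (unitVec d i) ^ 2 ≤ 2 * A.card * ∑ i, Ev f (unitVec d i) := by
    rw [Finset.mul_sum]
    exact Finset.sum_le_sum fun i _ => N_sq hf _
  rw [E_sum hd hf] at h2
  have := mul_le_mul_of_nonneg_left h2 (Nat.cast_nonneg (α := ℝ) d)
  linarith

lemma harm_zero {d : ℕ} (hd : 1 ≤ d) {A : Finset (Site d)} {f : Site d → ℝ} (hf : Supp A f)
    (h : ∀ x ∈ A, lap f x = 0) : f = 0 := by
  have h1 := G_sq hd hf
  rw [Finset.sum_eq_zero (fun x hx => by rw [h x hx]; simp)] at h1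
  have hG : Gv f = 0 := by nlinarith [sq_nonneg (Gv f)]
  have h2 := L1_bound (m := 2 * A.card + 1) hf (by omega)
    ((by omega : 2 * A.card ≤ 2 * A.card + 1).trans (Nat.le_self_pow (by omega) _))
  rw [hG, mul_zero] at h2
  funext x
  by_cases hx : x ∈ A
  · have := Finset.single_le_sum (f := fun x => |f x|) (fun _ _ => abs_nonneg _) hx
    exact abs_eq_zero.mp (le_antisymm (this.trans h2) (abs_nonneg _))
  · exact hf x hx

/-- Extension by zero. -/
def ext0 {d : ℕ} (A : Finset (Site d)) (g : A → ℝ) : Site d → ℝ :=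
  fun x => if h : x ∈ A then g ⟨x, h⟩ else 0

/-- The Dirichlet Laplacian as a linear map. -/
def lapLin {d : ℕ} (A : Finset (Site d)) : (A → ℝ) →ₗ[ℝ] (A → ℝ) where
  toFun g := fun x => lap (ext0 A g) x
  map_add' g h := by
    have : ext0 A (g + h) = ext0 A g + ext0 A h := by
      funext x; simp only [ext0, Pi.add_apply]; split_ifs <;> simp
    funext x
    simp only [this, lap, Pi.add_apply, Finset.sum_add_distrib]
    ring
  map_smul' c g := by
    have : ext0 A (c • g) = c • ext0 A g := by
      funext x; simp only [ext0, Pi.smul_apply]; split_ifs <;> simp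
    funext x
    simp only [this, lap, Pi.smul_apply, smul_eq_mul, RingHom.id_apply, ← mul_add,
      ← Finset.mul_sum]
    ring

lemma exists_exit {d : ℕ} (hd : 1 ≤ d) (A : Finset (Site d)) :
    ∃ e, IsExitFun d (A : Set (Site d)) e := by
  have hsupp : ∀ g, Supp A (ext0 A g) := fun g x hx => by simp [ext0, hx]
  have hinj : Function.Injective (lapLin A) := by
    rw [← LinearMap.ker_eq_bot, LinearMap.ker_eq_bot']
    intro g hg
    have h0 := harm_zero hd (hsupp g) (fun x hx => congrFun hg ⟨x, hx⟩)
    funext x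
    have := congrFun h0 x
    simpa [ext0] using this
  obtain ⟨g, hg⟩ := (LinearMap.injective_iff_surjective.mp hinj) (fun _ => -1)
  refine ⟨ext0 A g, fun x hx => hsupp g x (by simpa using hx), fun x hx => ?_⟩
  exact congrFun hg ⟨x, by simpa using hx⟩

lemma exitFun_spec {d : ℕ} (hd : 1 ≤ d) (A : Finset (Site d)) :
    IsExitFun d (A : Set (Site d)) (exitFun d A) := by
  have h := exists_exit hd A
  unfold exitFun
  rw [dif_pos h]
  exact h.choose_spec

lemma G_bound {d m : ℕ} (hd : 1 ≤ d) {A : Finset (Site d)} {f : Site d → ℝ} (hf : Supp A f)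
    (h : ∀ x ∈ A, lap f x = -1) (hm : 0 < m) (hmA : 2 * A.card ≤ m ^ d) :
    Gv f ≤ 8 * d ^ 2 * A.card * m := by
  have h1 := G_sq hd hf
  have h2 := L1_bound hf hm hmA
  have h3 : ∑ x ∈ A, f x * (- lap f x) ≤ 2 * m * Gv f := by
    refine le_trans (Finset.sum_le_sum fun x hx => ?_) h2
    rw [h x hx]
    simpa using le_abs_self (f x)
  have h4 : Gv f * Gv f ≤ (8 * d ^ 2 * A.card * m) * Gv f := by
    have := mul_le_mul_of_nonneg_left h3 (by positivity : (0 : ℝ) ≤ 4 * d ^ 2 * A.card)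
    nlinarith
  rcases (G_nonneg f).eq_or_lt with h0 | h0
  · rw [← h0]; positivity
  · exact le_of_mul_le_mul_right h4 h0

lemma e0_le {d : ℕ} (hd : 1 ≤ d) {A : Finset (Site d)} {f : Site d → ℝ} (hf : Supp A f) :
    |f 0| ≤ Gv f := by
  let i0 : Fin d := ⟨0, hd⟩
  let u := unitVec d i0
  let p : ℕ → Site d := fun k => k • u
  have hp : Function.Injective p := by
    intro k l h
    have := congrFun h i0
    simpa [p, u, unitVec] using this
  obtain ⟨k, hk⟩ := Infinite.exists_notMem_finset (A.preimage p hp.injOn)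
  rw [Finset.mem_preimage] at hk
  have h1 : f 0 = - ∑ j ∈ Finset.range k, (f (p j + u) - f (p j)) := by
    have : ∀ j, p j + u = p (j + 1) := fun j => (succ_nsmul u j).symm
    simp_rw [this]
    rw [Finset.sum_range_sub (fun j => f (p j)), hf _ hk]
    simp [p]
  have h2 : |f 0| ≤ Nv f u := by
    rw [h1, abs_neg]
    refine (Finset.abs_sum_le_sum_abs _ _).trans ?_
    rw [← Finset.sum_image (f := fun x => |f (x + u) - f x|) (g := p) hp.injOn]
    exact (summ_N hf u).sum_le_tsum _ fun _ _ => abs_nonneg _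
  exact h2.trans (Finset.single_le_sum (f := fun i => Nv f (unitVec d i))
    (fun _ _ => N_nonneg _ _) (Finset.mem_univ i0))

/-- Accumulated increments of `f` along the first `m` rotors at `x`. -/
def Hs {d : ℕ} (f : Site d → ℝ) (r : Site d → ℕ → Dir d) (x : Site d) (m : ℕ) : ℝ :=
  ∑ i ∈ Finset.range m, (f (x + dirVec d (r x i)) - f x)

lemma sum_update {d : ℕ} {A : Finset (Site d)} (K : Site d → ℕ → ℝ) (c : Site d → ℕ)
    {p : Site d} (hp : p ∈ A) :
    ∑ x ∈ A, K x (Function.update c p (c p + 1) x)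
      = ∑ x ∈ A, K x (c x) + (K p (c p + 1) - K p (c p)) := by
  rw [← Finset.add_sum_erase _ _ hp, ← Finset.add_sum_erase A (fun x => K x (c x)) hp]
  have : ∑ x ∈ A.erase p, K x (Function.update c p (c p + 1) x) = ∑ x ∈ A.erase p, K x (c x) :=
    Finset.sum_congr rfl fun x hx => by
      rw [Function.update_of_ne (Finset.ne_of_mem_erase hx)]
  rw [this, Function.update_self]
  ring

lemma walk_inv {d : ℕ} {A : Finset (Site d)} (f : Site d → ℝ) (r : Site d → ℕ → Dir d)
    (c : Site d → ℕ) (t : ℕ) (h : ∀ s < t, (walkState r c s).1 ∈ A) :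
    (∑ x ∈ A, Hs f r x ((walkState r c t).2 x)
      = ∑ x ∈ A, Hs f r x (c x) + (f (walkState r c t).1 - f 0)) ∧
    (∑ x ∈ A, ((walkState r c t).2 x : ℝ) = ∑ x ∈ A, (c x : ℝ) + t) := by
  induction t with
  | zero => simp [walkState]
  | succ t ih =>
    obtain ⟨h1, h2⟩ := ih fun s hs => h s (by omega)
    have hp := h t (by omega)
    have hw : walkState r c (t + 1) = rstep r (walkState r c t) := by
      simp only [walkState, Function.iterate_succ_apply']
    set s := walkState r c t
    rw [hw]
    simp only [rstep]
    constructor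
    · rw [sum_update (Hs f r) s.2 hp, h1]
      simp only [Hs, Finset.sum_range_succ]
      ring
    · rw [sum_update (fun _ m => (m : ℝ)) s.2 hp, h2]
      push_cast
      ring

lemma sum_dir {d : ℕ} (g : Site d → ℝ) (x : Site d) :
    ∑ ε : Dir d, g (x + dirVec d ε) = ∑ i, (g (x + unitVec d i) + g (x - unitVec d i)) := by
  rw [Fintype.sum_prod_type]
  refine Finset.sum_congr rfl fun i _ => ?_
  simp [dirVec, sub_eq_add_neg]

lemma Hs_disc {d : ℕ} (hd : 1 ≤ d) {D : ℝ} (hD : 1 ≤ D) {r : Site d → ℕ → Dir d}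
    (hr : HasDiscrepancy d D r) (f : Site d → ℝ) (x : Site d) (m : ℕ) :
    |Hs f r x m - m * lap f x| ≤ D * ∑ ε : Dir d, |f (x + dirVec d ε) - f x| := by
  have hd' : (d : ℝ) ≠ 0 := by positivity
  set cnt : Dir d → ℕ := fun ε => ((Finset.range m).filter (fun i => r x i = ε)).card with hcnt
  have h1 : Hs f r x m = ∑ ε : Dir d, (cnt ε : ℝ) * (f (x + dirVec d ε) - f x) := by
    unfold Hs
    rw [← Finset.sum_fiberwise (Finset.range m) (fun i => r x i)]
    refine Finset.sum_congr rfl fun ε _ => ?_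
    rw [hcnt, ← nsmul_eq_mul, ← Finset.sum_const]
    refine Finset.sum_congr rfl fun i hi => ?_
    rw [(Finset.mem_filter.mp hi).2]
  have h2 : (m : ℝ) * lap f x
      = ∑ ε : Dir d, (m : ℝ) / (2 * d) * (f (x + dirVec d ε) - f x) := by
    rw [← Finset.mul_sum, Finset.sum_sub_distrib, sum_dir]
    simp only [lap, Finset.sum_const, Finset.card_univ, Fintype.card_prod, Fintype.card_fin,
      Fintype.card_bool, nsmul_eq_mul]
    push_cast
    field_simp
  have h3 : ∀ ε, |(cnt ε : ℝ) - (m : ℝ) / (2 * d)| ≤ D := by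
    intro ε
    rcases Nat.eq_zero_or_pos m with h0 | h0
    · subst h0
      simp [hcnt]
      linarith
    · have := hr x ε m h0
      have he : ({i | i < m ∧ r x i = ε} : Set ℕ)
          = ((Finset.range m).filter (fun i => r x i = ε) : Finset ℕ) := by
        ext i; simp
      rwa [he, Set.ncard_coe_finset] at this
  rw [h1, h2, ← Finset.sum_sub_distrib, Finset.mul_sum]
  refine (Finset.abs_sum_le_sum_abs _ _).trans (Finset.sum_le_sum fun ε _ => ?_)
  rw [← sub_mul, abs_mul]
  exact mul_le_mul_of_nonneg_right (h3 ε) (abs_nonneg _)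

lemma sum_grad {d : ℕ} {A : Finset (Site d)} {f : Site d → ℝ} (hf : Supp A f) :
    ∑ x ∈ A, ∑ ε : Dir d, |f (x + dirVec d ε) - f x| ≤ 2 * Gv f := by
  rw [Finset.sum_comm, Fintype.sum_prod_type]
  unfold Gv
  rw [Finset.mul_sum]
  refine Finset.sum_le_sum fun i _ => ?_
  have key : ∀ u, ∑ x ∈ A, |f (x + u) - f x| ≤ Nv f u := fun u =>
    (summ_N hf u).sum_le_tsum _ fun _ _ => abs_nonneg _
  have h1 := key (unitVec d i)
  have h2 := key (-unitVec d i)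
  rw [N_neg] at h2
  simp only [Fintype.sum_bool, dirVec, if_true, Bool.false_eq_true, if_false]
  linarith

lemma F_disc {d : ℕ} (hd : 1 ≤ d) {D : ℝ} (hD : 1 ≤ D) {r : Site d → ℕ → Dir d}
    (hr : HasDiscrepancy d D r) {A : Finset (Site d)} {f : Site d → ℝ} (hf : Supp A f)
    (hl : ∀ x ∈ A, lap f x = -1) (c : Site d → ℕ) :
    |∑ x ∈ A, Hs f r x (c x) + ∑ x ∈ A, (c x : ℝ)| ≤ D * (2 * Gv f) := by
  rw [← Finset.sum_add_distrib]
  refine (Finset.abs_sum_le_sum_abs _ _).trans ?_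
  refine le_trans ?_ (mul_le_mul_of_nonneg_left (sum_grad hf) (by linarith))
  rw [Finset.mul_sum]
  refine Finset.sum_le_sum fun x hx => ?_
  have := Hs_disc hd hD hr f x (c x)
  rw [hl x hx] at this
  simpa using this

lemma walk_exits {d : ℕ} (hd : 1 ≤ d) {D : ℝ} (hD : 1 ≤ D) {r : Site d → ℕ → Dir d}
    (hr : HasDiscrepancy d D r) (A : Finset (Site d)) (c : Site d → ℕ) :
    ∃ t, (walkState r c t).1 ∉ A := by
  by_contra! hcon
  obtain ⟨f, hf0, hl⟩ := exists_exit hd A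
  have hf : Supp A f := fun x hx => hf0 x (by simpa using hx)
  have hl' : ∀ x ∈ A, lap f x = -1 := fun x hx => hl x (by simpa using hx)
  obtain ⟨t, ht⟩ := exists_nat_gt (4 * (D * Gv f) + 2 * ∑ x ∈ A, |f x|)
  obtain ⟨h1, h2⟩ := walk_inv (A := A) f r c t fun s _ => hcon s
  have b1 := abs_le.mp (F_disc hd hD hr hf hl' c)
  have b2 := abs_le.mp (F_disc hd hD hr hf hl' (walkState r c t).2)
  have b3 : ∀ x ∈ A, |f x| ≤ ∑ x ∈ A, |f x| := fun x hx =>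
    Finset.single_le_sum (f := fun x => |f x|) (fun _ _ => abs_nonneg _) hx
  have b4 := abs_le.mp (b3 _ (hcon t))
  have b5 := abs_le.mp (b3 _ (hcon 0))
  simp only [walkState, Function.iterate_zero, id] at b5
  linarith [b1.1, b1.2, b2.1, b2.2, b4.1, b4.2, b5.1, b5.2]

lemma exit_spec {d : ℕ} (hd : 1 ≤ d) {D : ℝ} (hD : 1 ≤ D) {r : Site d → ℕ → Dir d}
    (hr : HasDiscrepancy d D r) {S : Set (Site d)} (hS : S.Finite) (c : Site d → ℕ) :
    (walkState r c (exitSteps r S c)).1 ∉ S ∧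
      ∀ s < exitSteps r S c, (walkState r c s).1 ∈ S := by
  obtain ⟨t, ht⟩ := walk_exits hd hD hr hS.toFinset c
  have hne : {t | (walkState r c t).1 ∉ S}.Nonempty := ⟨t, by simpa using ht⟩
  refine ⟨Nat.sInf_mem hne, fun s hs => ?_⟩
  have := Nat.notMem_of_lt_sInf hs
  simpa using this

lemma agg_fin {d : ℕ} (hd : 1 ≤ d) {D : ℝ} (hD : 1 ≤ D) {r : Site d → ℕ → Dir d}
    (hr : HasDiscrepancy d D r) (k : ℕ) :
    (aggState r k).1.Finite ∧ (aggState r k).1.ncard = k + 1 := by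
  induction k with
  | zero => simp [aggState]
  | succ k ih =>
    have h := (exit_spec hd hD hr ih.1 (aggState r k).2.1).1
    simp only [aggState]
    refine ⟨ih.1.insert _, ?_⟩
    rw [Set.ncard_insert_of_notMem h ih.1, ih.2]

lemma agg_mono {d : ℕ} (r : Site d → ℕ → Dir d) : Monotone (fun k => (aggState r k).1) :=
  monotone_nat_of_le_succ fun k => by
    simp only [aggState]
    exact Set.subset_insert _ _

lemma agg_inv {d : ℕ} (hd : 1 ≤ d) {D : ℝ} (hD : 1 ≤ D) {r : Site d → ℕ → Dir d}
    (hr : HasDiscrepancy d D r) (A : Finset (Site d)) (f : Site d → ℝ) (k : ℕ)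
    (hA : ∀ j < k, (aggState r j).1 ⊆ A) :
    (∑ x ∈ A, Hs f r x ((aggState r k).2.1 x)
      = (∑ᶠ x ∈ (aggState r k).1, f x) - (k + 1) * f 0) ∧
    ∑ x ∈ A, ((aggState r k).2.1 x : ℝ) = (aggState r k).2.2 := by
  induction k with
  | zero => simp [aggState, Hs]
  | succ k ih =>
    obtain ⟨i1, i2⟩ := ih fun j hj => hA j (by omega)
    obtain ⟨fin, -⟩ := agg_fin hd hD hr k
    obtain ⟨h1, h2⟩ := exit_spec hd hD hr fin (aggState r k).2.1
    obtain ⟨w1, w2⟩ := walk_inv (A := A) f r (aggState r k).2.1 _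
      fun s hs => by simpa using hA k (by omega) (h2 s hs)
    simp only [aggState]
    rw [w1, w2, i1, i2, finsum_mem_insert _ h1 fin]
    push_cast
    constructor <;> ring

lemma exists_m {d n : ℕ} (hd : 1 ≤ d) (hn : 1 ≤ n) :
    ∃ m : ℕ, 0 < m ∧ 2 * n ≤ m ^ d ∧ (m : ℝ) ≤ 4 * (n : ℝ) ^ (1 / (d : ℝ)) := by
  have hn' : (1 : ℝ) ≤ n := by exact_mod_cast hn
  set y : ℝ := (n : ℝ) ^ (1 / (d : ℝ)) with hy
  have hy1 : 1 ≤ y := Real.one_le_rpow hn' (by positivity)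
  have hyd : y ^ d = n := by
    rw [hy, one_div, Real.rpow_inv_natCast_pow (by positivity) (by omega)]
  have hc := Nat.le_ceil y
  have hc2 := Nat.ceil_lt_add_one (by linarith : 0 ≤ y)
  refine ⟨2 * ⌈y⌉₊, ?_, ?_, ?_⟩
  · have : 0 < ⌈y⌉₊ := Nat.ceil_pos.mpr (by linarith)
    omega
  · have h1 : n ≤ ⌈y⌉₊ ^ d := by
      have : (n : ℝ) ≤ (⌈y⌉₊ : ℝ) ^ d := by
        rw [← hyd]
        exact pow_le_pow_left₀ (by linarith) hc d
      exact_mod_cast this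
    rw [mul_pow]
    exact Nat.mul_le_mul (Nat.le_self_pow (by omega) 2) h1
  · push_cast
    linarith

theorem lemma_exit (d : ℕ) (hd : 1 ≤ d) :
    ∃ C : ℝ, ∀ (D : ℝ), 1 ≤ D → ∀ r : Site d → ℕ → Dir d, HasDiscrepancy d D r →
      ∀ n : ℕ, 1 ≤ n →
        |(totalSteps r n : ℝ) - ((n : ℝ) * exitFun d (aggRegion r n) 0
            - ∑ᶠ x ∈ aggRegion r n, exitFun d (aggRegion r n) x)|
          ≤ C * D * (n : ℝ) ^ (1 + 1 / (d : ℝ)) := by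
  refine ⟨96 * d ^ 2, fun D hD r hr n hn => ?_⟩
  obtain ⟨fin, hcard⟩ := agg_fin hd hD hr (n - 1)
  have hA : aggRegion r n = (fin.toFinset : Set (Site d)) := by simp [aggRegion]
  have hAc : fin.toFinset.card = n := by
    rw [← Set.ncard_eq_toFinset_card _ fin, hcard]; omega
  have hsub : ∀ j < n, (aggState r j).1 ⊆ (fin.toFinset : Set (Site d)) := by
    intro j hj
    rw [Set.Finite.coe_toFinset]
    exact agg_mono r (by omega : j ≤ n - 1)
  rw [hA]
  set A := fin.toFinset with hAdef
  obtain ⟨e0, hl⟩ := exitFun_spec hd A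
  set f := exitFun d (A : Set (Site d)) with hfdef
  have hf : Supp A f := fun x hx => e0 x (by simpa using hx)
  have hl' : ∀ x ∈ A, lap f x = -1 := fun x hx => hl x (by simpa using hx)
  obtain ⟨i1, i2⟩ := agg_inv hd hD hr A f n hsub
  have hsum : ∑ᶠ x ∈ (aggState r n).1, f x = ∑ᶠ x ∈ (A : Set (Site d)), f x := by
    obtain ⟨k, rfl⟩ : ∃ k, n = k + 1 := ⟨n - 1, by omega⟩
    have fink : (aggState r k).1.Finite := fin
    have h1 := (exit_spec hd hD hr fink (aggState r k).2.1).1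
    simp only [aggState]
    have hAk : (A : Set (Site d)) = (aggState r k).1 := by simp [hAdef]
    rw [finsum_mem_insert _ h1 fink, ← hAk, e0 _ (by rw [hAk]; exact h1), zero_add]
  rw [hsum] at i1
  have b := F_disc hd hD hr hf hl' (aggState r n).2.1
  rw [i1, i2] at b
  obtain ⟨m, hm, hmA, hmle⟩ := exists_m hd hn
  have hG := G_bound hd hf hl' hm (by rw [hAc]; exact hmA)
  have h0 := e0_le hd hf
  have hG' : Gv f ≤ 32 * d ^ 2 * (n : ℝ) ^ (1 + 1 / (d : ℝ)) := by
    rw [Real.rpow_add (by exact_mod_cast hn), Real.rpow_one]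
    rw [hAc] at hG
    have := mul_le_mul_of_nonneg_left hmle (by positivity : (0 : ℝ) ≤ 8 * d ^ 2 * n)
    linarith
  have hDG : Gv f ≤ D * Gv f := le_mul_of_one_le_left (G_nonneg f) hD
  have hDG' := mul_le_mul_of_nonneg_left hG' (by linarith : 0 ≤ D)
  have b' := abs_le.mp b
  have h0' := abs_le.mp h0
  unfold totalSteps
  rw [abs_le]
  constructor <;> linarith [b'.1, b'.2, h0'.1, h0'.2]

end RotorRouterPaper
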